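/- arXiv:2403.08168 — 2 statements merged into one kernel-verified Lean document; each statement's English description precedes it below -/
import Mathlib

section
/- Let Δ > 0, let X, Y be real n₁×n₂ matrices, let (i₁,j₁),…,(i_{m'},j_{m'}) be i.i.d. indices uniformly distributed on [n₁]×[n₂], and let τ₁,…,τ_{m'} be i.i.d. uniform on [-Δ/2, Δ/2], independent of the indices. Then E[ Σ_{k=1}^{m'} |Q_Δ(X_{i_k,j_k} + τ_k) - Q_Δ(Y_{i_k,j_k} + τ_k)| ] = (m'/(n₁n₂)) ‖X - Y‖₁. -/
open MeasureTheory ProbabilityTheory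

/-- The uniform quantizer `Q_Δ(t) = Δ(⌊t/Δ⌋ + 1/2)`. -/
noncomputable def uniformQuantizer (Δ : ℝ) (t : ℝ) : ℝ :=
  Δ * ((⌊t / Δ⌋ : ℤ) + 1 / 2)

/-- The uniform probability measure on the interval `[-Δ/2, Δ/2]`. -/
noncomputable def uniformDither (Δ : ℝ) : Measure ℝ :=
  (ENNReal.ofReal Δ)⁻¹ • volume.restrict (Set.Icc (-(Δ / 2)) (Δ / 2))

/-- The uniform probability measure on the finite index set `Fin n₁ × Fin n₂`. -/
noncomputable def uniformIndex (n₁ n₂ : ℕ) : Measure (Fin n₁ × Fin n₂) :=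
  ((n₁ * n₂ : ℕ) : ENNReal)⁻¹ • Measure.count

/-- The entrywise ℓ₁-norm of a real matrix. -/
noncomputable def matL1 {n₁ n₂ : ℕ} (X : Matrix (Fin n₁) (Fin n₂) ℝ) : ℝ :=
  ∑ i, ∑ j, |X i j|

theorem uq_eq {Δ : ℝ} (hΔ : 0 < Δ) (u : ℝ) :
    uniformQuantizer Δ u = u + Δ / 2 - Δ * Int.fract (u / Δ) := by
  unfold uniformQuantizer
  have h : (⌊u / Δ⌋ : ℝ) = u / Δ - Int.fract (u / Δ) := by
    have := Int.floor_add_fract (u / Δ)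
    linarith
  rw [h]
  field_simp
  ring

theorem uq_mono {Δ : ℝ} (hΔ : 0 < Δ) : Monotone (uniformQuantizer Δ) := by
  intro u v huv
  unfold uniformQuantizer
  gcongr

theorem uq_bound {Δ : ℝ} (hΔ : 0 < Δ) (u v : ℝ) :
    |uniformQuantizer Δ u - uniformQuantizer Δ v| ≤ |u - v| + Δ := by
  rw [uq_eq hΔ, uq_eq hΔ]
  have h1 := Int.fract_nonneg (u / Δ)
  have h2 := (Int.fract_lt_one (u / Δ)).le
  have h3 := Int.fract_nonneg (v / Δ)
  have h4 := (Int.fract_lt_one (v / Δ)).le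
  have h5 := le_abs_self (u - v)
  have h6 := neg_abs_le (u - v)
  rw [abs_le]
  constructor <;> nlinarith

theorem uq_shift_int {Δ : ℝ} (hΔ : 0 < Δ) (a : ℝ) :
    ∫ t in (-(Δ / 2))..(Δ / 2), (uniformQuantizer Δ (a + t) - a)
      = ∫ t in (-(Δ / 2))..(Δ / 2), uniformQuantizer Δ t := by
  have hper : Function.Periodic (fun t : ℝ => uniformQuantizer Δ t - t) Δ := by
    intro t
    simp only [uq_eq hΔ]
    rw [add_div, div_self hΔ.ne', Int.fract_add_one]
    ring
  have hint : ∀ c : ℝ, IntervalIntegrable (fun t => uniformQuantizer Δ (c + t) - c - t) volume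
      (-(Δ / 2)) (Δ / 2) := by
    intro c
    refine (IntervalIntegrable.sub ?_ ?_).sub ?_
    · exact Monotone.intervalIntegrable (fun x y h => uq_mono hΔ (by linarith))
    · simp
    · exact intervalIntegral.intervalIntegrable_id
  have key : ∀ c : ℝ, ∫ t in (-(Δ / 2))..(Δ / 2), (uniformQuantizer Δ (c + t) - c)
      = (∫ t in (-(Δ / 2))..(-(Δ / 2) + Δ), (uniformQuantizer Δ t - t))
        + ∫ t in (-(Δ / 2))..(Δ / 2), t := by
    intro c
    have e1 : ∫ t in (-(Δ / 2))..(Δ / 2), (uniformQuantizer Δ (c + t) - c)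
        = ∫ t in (-(Δ / 2))..(Δ / 2), ((uniformQuantizer Δ (c + t) - c - t) + t) := by
      congr 1; ext t; ring
    rw [e1, intervalIntegral.integral_add (hint c) intervalIntegral.intervalIntegrable_id]
    congr 1
    rw [hper.intervalIntegral_add_eq (-(Δ / 2)) (c + -(Δ / 2))]
    have e2 := intervalIntegral.integral_comp_add_left (a := -(Δ / 2)) (b := Δ / 2)
      (fun t => uniformQuantizer Δ t - t) c
    rw [show c + -(Δ / 2) + Δ = c + Δ / 2 by ring, ← e2]
    congr 1; ext t; ring
  rw [key a]
  have := key 0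
  simp only [zero_add, sub_zero] at this
  rw [this]

theorem uq_abs_int {Δ : ℝ} (hΔ : 0 < Δ) (a b : ℝ) :
    ∫ t in (-(Δ / 2))..(Δ / 2), |uniformQuantizer Δ (a + t) - uniformQuantizer Δ (b + t)|
      = Δ * |a - b| := by
  wlog hab : b ≤ a generalizing a b
  · have := this b a (by linarith)
    rw [abs_sub_comm a b, ← this]
    congr 1; ext t; exact abs_sub_comm _ _
  have hint : ∀ c : ℝ, IntervalIntegrable (fun t => uniformQuantizer Δ (c + t) - c) volume
      (-(Δ / 2)) (Δ / 2) := by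
    intro c
    exact Monotone.intervalIntegrable
      (fun x y h => sub_le_sub_right (uq_mono hΔ (by linarith)) c)
  have e : ∀ t, |uniformQuantizer Δ (a + t) - uniformQuantizer Δ (b + t)|
      = ((uniformQuantizer Δ (a + t) - a) - (uniformQuantizer Δ (b + t) - b)) + (a - b) := by
    intro t
    rw [abs_of_nonneg (sub_nonneg.2 (uq_mono hΔ (by linarith)))]
    ring
  simp only [e]
  rw [intervalIntegral.integral_add ((hint a).sub (hint b)) (by simp),
    intervalIntegral.integral_sub (hint a) (hint b), uq_shift_int hΔ, uq_shift_int hΔ,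
    abs_of_nonneg (by linarith)]
  simp
  ring

theorem uq_dither_int {Δ : ℝ} (hΔ : 0 < Δ) (a b : ℝ) :
    ∫ t, |uniformQuantizer Δ (a + t) - uniformQuantizer Δ (b + t)| ∂(uniformDither Δ)
      = |a - b| := by
  unfold uniformDither
  rw [integral_smul_measure, integral_Icc_eq_integral_Ioc,
    ← intervalIntegral.integral_of_le (by linarith), uq_abs_int hΔ]
  rw [ENNReal.toReal_inv, ENNReal.toReal_ofReal hΔ.le, smul_eq_mul]
  field_simp

/-- Unbiasedness of the sampled quantized ℓ₁ distance: with i.i.d. uniform indices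
`(i_k,j_k)` and i.i.d. uniform dithers `τ_k` independent of the indices (encoded by the
i.i.d. family `W k = ((i_k,j_k), τ_k)` with product distribution),
`E[Σ_k |Q_Δ(X_{i_k,j_k}+τ_k) - Q_Δ(Y_{i_k,j_k}+τ_k)|] = (m'/(n₁n₂)) ‖X - Y‖₁`. -/
theorem sampled_quantized_l1_expectation {n₁ n₂ m' : ℕ} (hn₁ : 0 < n₁) (hn₂ : 0 < n₂)
    (Δ : ℝ) (hΔ : 0 < Δ)
    (X Y : Matrix (Fin n₁) (Fin n₂) ℝ)
    {Ω : Type*} [MeasurableSpace Ω] (P : Measure Ω) [IsProbabilityMeasure P]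
    (W : Fin m' → Ω → (Fin n₁ × Fin n₂) × ℝ)
    (hmeas : ∀ k, Measurable (W k))
    (hindep : iIndepFun W P)
    (hdist : ∀ k, Measure.map (W k) P = (uniformIndex n₁ n₂).prod (uniformDither Δ)) :
    ∫ ω, (∑ k : Fin m',
        |uniformQuantizer Δ (X (W k ω).1.1 (W k ω).1.2 + (W k ω).2)
          - uniformQuantizer Δ (Y (W k ω).1.1 (W k ω).1.2 + (W k ω).2)|) ∂P
      = ((m' : ℝ) / ((n₁ : ℝ) * n₂)) * matL1 (X - Y) := by
  haveI hfin1 : IsFiniteMeasure (uniformIndex n₁ n₂) := by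
    unfold uniformIndex
    refine Measure.smul_finite _ ?_
    simp [hn₁.ne', hn₂.ne']
  haveI hfin2 : IsFiniteMeasure (uniformDither Δ) := by
    unfold uniformDither
    refine Measure.smul_finite _ ?_
    simp [hΔ]
  set f : (Fin n₁ × Fin n₂) × ℝ → ℝ := fun w =>
    |uniformQuantizer Δ (X w.1.1 w.1.2 + w.2) - uniformQuantizer Δ (Y w.1.1 w.1.2 + w.2)| with hf
  have hfm : Measurable f := by
    refine measurable_from_prod_countable_right fun p => ?_
    have hq := (uq_mono hΔ).measurable
    simp only [hf]
    have h1 : Measurable fun t : ℝ => uniformQuantizer Δ (X p.1 p.2 + t) :=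
      hq.comp (measurable_const_add _)
    have h2 : Measurable fun t : ℝ => uniformQuantizer Δ (Y p.1 p.2 + t) :=
      hq.comp (measurable_const_add _)
    exact (h1.sub h2).norm
  have hfi : Integrable f ((uniformIndex n₁ n₂).prod (uniformDither Δ)) := by
    refine Integrable.of_bound hfm.aestronglyMeasurable
      ((∑ p : Fin n₁ × Fin n₂, |X p.1 p.2 - Y p.1 p.2|) + Δ) (Filter.Eventually.of_forall ?_)
    intro w
    simp only [hf, Real.norm_eq_abs, abs_abs]
    refine (uq_bound hΔ _ _).trans ?_
    rw [add_sub_add_right_eq_sub]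
    gcongr
    exact Finset.single_le_sum (f := fun p : Fin n₁ × Fin n₂ => |X p.1 p.2 - Y p.1 p.2|)
      (fun _ _ => abs_nonneg _) (Finset.mem_univ w.1)
  have hval : ∫ w, f w ∂((uniformIndex n₁ n₂).prod (uniformDither Δ))
      = ((n₁ : ℝ) * n₂)⁻¹ * matL1 (X - Y) := by
    rw [integral_prod f hfi]
    simp only [hf, uq_dither_int hΔ]
    unfold uniformIndex matL1
    rw [integral_smul_measure, integral_count, Fintype.sum_prod_type]
    simp
  have hk : ∀ k, Integrable (fun ω => f (W k ω)) P := by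
    intro k
    have := hfi
    rw [← hdist k] at this
    exact this.comp_measurable (hmeas k)
  change ∫ ω, (∑ k : Fin m', f (W k ω)) ∂P = _
  rw [integral_finsetSum _ (fun k _ => hk k)]
  have hv : ∀ k, ∫ ω, f (W k ω) ∂P = ((n₁ : ℝ) * n₂)⁻¹ * matL1 (X - Y) := by
    intro k
    rw [← hval, ← hdist k, integral_map (hmeas k).aemeasurable hfm.aestronglyMeasurable]
  simp only [hv]
  simp
  ring
end

section
/- Let Δ > 0, let X, Y be real n₁×n₂ matrices with all entries of X and of Y bounded in absolute value by Δ/2, let (i₁,j₁),…,(i_{m'},j_{m'}) be i.i.d. indices uniformly distributed on [n₁]×[n₂], and let τ₁,…,τ_{m'} be i.i.d. uniform on [-Δ/2, Δ/2], independent of the indices. Then the one-bit distance is unbiased: E[ Σ_{k=1}^{m'} (Δ/2)·|sgn(X_{i_k,j_k} + τ_k) - sgn(Y_{i_k,j_k} + τ_k)| ] = (m'/(n₁n₂)) ‖X - Y‖₁. -/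
open MeasureTheory ProbabilityTheory

lemma measurable_sign_aux : Measurable Real.sign := by
  unfold Real.sign
  exact Measurable.ite measurableSet_Iio measurable_const
    (Measurable.ite measurableSet_Ioi measurable_const measurable_const)

lemma abs_sign_le_aux (t : ℝ) : |Real.sign t| ≤ 1 := by
  rcases Real.sign_apply_eq t with h | h | h <;> rw [h] <;> norm_num

lemma dither_integral_aux (D x y : ℝ) (hx : |x| ≤ D / 2) (hy : |y| ≤ D / 2) (hxy : x ≤ y) :
    ∫ t in Set.Icc (-(D / 2)) (D / 2), |Real.sign (x + t) - Real.sign (y + t)| = 2 * |x - y| := by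
  have hae : (fun t : ℝ => |Real.sign (x + t) - Real.sign (y + t)|)
      =ᵐ[volume.restrict (Set.Icc (-(D / 2)) (D / 2))]
      (Set.Icc (-y) (-x)).indicator (fun _ => (2 : ℝ)) := by
    apply ae_restrict_of_ae
    have h1 : ∀ᵐ t : ℝ, t ≠ -x := by simp [ae_iff]
    have h2 : ∀ᵐ t : ℝ, t ≠ -y := by simp [ae_iff]
    filter_upwards [h1, h2] with t h1 h2
    rcases lt_or_gt_of_ne h1 with h1 | h1 <;> rcases lt_or_gt_of_ne h2 with h2 | h2
    · rw [Set.indicator_of_notMem (by simp; intro; linarith), Real.sign_of_neg (by linarith),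
        Real.sign_of_neg (by linarith)]
      norm_num
    · rw [Set.indicator_of_mem (by constructor <;> linarith), Real.sign_of_neg (by linarith),
        Real.sign_of_pos (by linarith)]
      norm_num
    · linarith
    · rw [Set.indicator_of_notMem (by simp; intro; linarith), Real.sign_of_pos (by linarith),
        Real.sign_of_pos (by linarith)]
      norm_num
  rw [abs_le] at hx hy
  rw [integral_congr_ae hae, integral_indicator measurableSet_Icc,
    Measure.restrict_restrict measurableSet_Icc,
    Set.inter_eq_left.mpr (Set.Icc_subset_Icc (by linarith) (by linarith))]
  rw [abs_of_nonpos (by linarith)]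
  simp only [integral_const, smul_eq_mul, measureReal_restrict_apply_univ, Real.volume_real_Icc]
  rw [max_eq_left (by linarith)]
  ring

lemma dither_integral_aux2 (D x y : ℝ) (hx : |x| ≤ D / 2) (hy : |y| ≤ D / 2) :
    ∫ t in Set.Icc (-(D / 2)) (D / 2), |Real.sign (x + t) - Real.sign (y + t)| = 2 * |x - y| := by
  rcases le_total x y with h | h
  · exact dither_integral_aux D x y hx hy h
  · rw [abs_sub_comm x y, ← dither_integral_aux D y x hy hx h]
    simp_rw [abs_sub_comm]

/-- Unbiasedness of the sampled one-bit distance: for matrices with entries bounded by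
`Δ/2`, with i.i.d. uniform indices `(i_k,j_k)` and i.i.d. uniform dithers `τ_k`
independent of the indices (encoded by the i.i.d. family `W k = ((i_k,j_k), τ_k)` with
product distribution),
`E[Σ_k (Δ/2)|sgn(X_{i_k,j_k}+τ_k) - sgn(Y_{i_k,j_k}+τ_k)|] = (m'/(n₁n₂)) ‖X - Y‖₁`. -/
theorem sampled_one_bit_l1_expectation {n₁ n₂ m' : ℕ} (hn₁ : 0 < n₁) (hn₂ : 0 < n₂)
    (Δ : ℝ) (hΔ : 0 < Δ)
    (X Y : Matrix (Fin n₁) (Fin n₂) ℝ)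
    (hX : ∀ i j, |X i j| ≤ Δ / 2) (hY : ∀ i j, |Y i j| ≤ Δ / 2)
    {Ω : Type*} [MeasurableSpace Ω] (P : Measure Ω) [IsProbabilityMeasure P]
    (W : Fin m' → Ω → (Fin n₁ × Fin n₂) × ℝ)
    (hmeas : ∀ k, Measurable (W k))
    (hindep : iIndepFun W P)
    (hdist : ∀ k, Measure.map (W k) P = (uniformIndex n₁ n₂).prod (uniformDither Δ)) :
    ∫ ω, (∑ k : Fin m',
        Δ / 2 * |Real.sign (X (W k ω).1.1 (W k ω).1.2 + (W k ω).2)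
          - Real.sign (Y (W k ω).1.1 (W k ω).1.2 + (W k ω).2)|) ∂P
      = ((m' : ℝ) / ((n₁ : ℝ) * n₂)) * matL1 (X - Y) := by
  have hms := measurable_sign_aux
  set f : (Fin n₁ × Fin n₂) × ℝ → ℝ := fun p =>
    Δ / 2 * |Real.sign (X p.1.1 p.1.2 + p.2) - Real.sign (Y p.1.1 p.1.2 + p.2)| with hf
  have hfm : Measurable f := by
    apply measurable_from_prod_countable_right
    intro p
    simp only [hf]
    fun_prop
  have hfb : ∀ p, ‖f p‖ ≤ Δ := by
    intro p
    have h1 := abs_sign_le_aux (X p.1.1 p.1.2 + p.2)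
    have h2 := abs_sign_le_aux (Y p.1.1 p.1.2 + p.2)
    have h3 := abs_sub (Real.sign (X p.1.1 p.1.2 + p.2)) (Real.sign (Y p.1.1 p.1.2 + p.2))
    simp only [hf]
    rw [Real.norm_eq_abs, abs_of_nonneg (by positivity)]
    calc _ ≤ Δ / 2 * 2 := by gcongr; linarith
      _ = Δ := by ring
  have hint : ∀ k, Integrable (fun ω => f (W k ω)) P := fun k =>
    Integrable.of_bound (hfm.comp (hmeas k)).aestronglyMeasurable Δ
      (Filter.Eventually.of_forall fun ω => hfb _)
  have hk : ∀ k, ∫ ω, f (W k ω) ∂P = ((n₁ : ℝ) * n₂)⁻¹ * matL1 (X - Y) := by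
    intro k
    have hprob : IsProbabilityMeasure ((uniformIndex n₁ n₂).prod (uniformDither Δ)) := by
      rw [← hdist k]
      exact Measure.isProbabilityMeasure_map (hmeas k).aemeasurable
    have : SFinite (uniformDither Δ) := by unfold uniformDither; infer_instance
    have : SFinite (uniformIndex n₁ n₂) := by unfold uniformIndex; infer_instance
    rw [← integral_map (hmeas k).aemeasurable hfm.aestronglyMeasurable, hdist k,
      integral_prod _ (Integrable.of_bound hfm.aestronglyMeasurable Δ
        (Filter.Eventually.of_forall hfb))]
    have hin : ∀ p : Fin n₁ × Fin n₂, ∫ t, f (p, t) ∂(uniformDither Δ)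
        = |(X - Y) p.1 p.2| := by
      intro p
      simp only [hf, uniformDither]
      rw [integral_smul_measure, integral_const_mul,
        dither_integral_aux2 Δ _ _ (hX _ _) (hY _ _), ENNReal.toReal_inv,
        ENNReal.toReal_ofReal hΔ.le, Matrix.sub_apply, smul_eq_mul]
      field_simp
    simp_rw [hin]
    rw [uniformIndex, integral_smul_measure, integral_count, Fintype.sum_prod_type]
    simp [matL1]
  rw [integral_finsetSum _ (fun k _ => hint k)]
  change ∑ k, ∫ ω, f (W k ω) ∂P = _
  simp_rw [hk]
  simp
  ring
end
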